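/- Deterministic asymptotics of the conjugate MAP: let β, μ₀ ∈ ℝ^p be unit vectors, κ₀ ≥ 0, c > 0, (σ_n) a positive sequence with σ_n → 0, (K_n) a positive sequence with σ_n K_n → c, and (β_n) a sequence of unit vectors with σ_n^{-1}(β_n − β) → 0. Define β_n^c = (K_n β_n + κ₀ μ₀)/‖K_n β_n + κ₀ μ₀‖₂. Then σ_n^{-1}(β_n^c − β) → (κ₀/c)(μ₀ − ⟨μ₀, β⟩β). -/

import Mathlib

open scoped RealInnerProductSpace
open Filter Topology

theorem stmt9 {p : ℕ} (β μ₀ : EuclideanSpace ℝ (Fin p)) (hβ : ‖β‖ = 1) (hμ₀ : ‖μ₀‖ = 1)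
    (κ₀ : ℝ) (hκ₀ : 0 ≤ κ₀) (c : ℝ) (hc : 0 < c)
    (σ K : ℕ → ℝ) (hσpos : ∀ n, 0 < σ n) (hKpos : ∀ n, 0 < K n)
    (hσ : Tendsto σ atTop (𝓝 0))
    (hσK : Tendsto (fun n => σ n * K n) atTop (𝓝 c))
    (βn : ℕ → EuclideanSpace ℝ (Fin p)) (hβn : ∀ n, ‖βn n‖ = 1)
    (hβconv : Tendsto (fun n => (σ n)⁻¹ • (βn n - β)) atTop (𝓝 0)) :
    Tendsto
      (fun n => (σ n)⁻¹ •
        (‖K n • βn n + κ₀ • μ₀‖⁻¹ • (K n • βn n + κ₀ • μ₀) - β)) atTop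
      (𝓝 ((κ₀ / c) • (μ₀ - ⟪μ₀, β⟫ • β))) := by
  have hb : Tendsto βn atTop (𝓝 β) := by
    have h := (hσ.smul hβconv).add_const β
    rw [smul_zero, zero_add] at h
    refine h.congr fun n => ?_
    rw [smul_smul, mul_inv_cancel₀ (hσpos n).ne', one_smul, sub_add_cancel]
  obtain ⟨N, hN⟩ : ∃ N : ℕ → ℝ, ∀ n, N n = ‖(σ n * K n) • βn n + (σ n * κ₀) • μ₀‖ :=
    ⟨_, fun _ => rfl⟩
  have hNlim : Tendsto N atTop (𝓝 c) := by
    have h := ((hσK.smul hb).add ((hσ.mul_const κ₀).smul_const μ₀)).norm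
    rw [zero_mul, zero_smul, add_zero, norm_smul, hβ, mul_one, Real.norm_of_nonneg hc.le] at h
    exact h.congr fun n => (hN n).symm
  have hN0 : ∀ n, 0 ≤ N n := fun n => by rw [hN]; exact norm_nonneg _
  have ha : ∀ n, 0 < σ n * K n := fun n => mul_pos (hσpos n) (hKpos n)
  have hNsq : ∀ n, N n ^ 2 = (σ n * K n) ^ 2
      + 2 * (σ n * K n) * (σ n * κ₀) * ⟪μ₀, βn n⟫ + (σ n * κ₀) ^ 2 := fun n => by
    rw [hN, norm_add_sq_real, norm_smul, norm_smul, hβn, hμ₀, real_inner_smul_left,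
      real_inner_smul_right, mul_one, mul_one, Real.norm_eq_abs, Real.norm_eq_abs, sq_abs, sq_abs,
      real_inner_comm]
    ring
  have hq : Tendsto (fun n => (σ n)⁻¹ * (σ n * K n - N n)) atTop (𝓝 (-(κ₀ * ⟪μ₀, β⟫))) := by
    have hi : Tendsto (fun n => ⟪μ₀, βn n⟫) atTop (𝓝 ⟪μ₀, β⟫) := tendsto_const_nhds.inner hb
    have h := ((((hσK.mul_const (2 * κ₀)).mul hi).add (hσ.mul_const (κ₀ ^ 2))).neg).div
      (hσK.add hNlim) (by positivity)
    have e : -(c * (2 * κ₀) * ⟪μ₀, β⟫ + 0 * κ₀ ^ 2) / (c + c) = -(κ₀ * ⟪μ₀, β⟫) := by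
      field_simp
      ring
    rw [e] at h
    refine h.congr fun n => ?_
    have h1 := hσpos n
    have h2 : σ n * K n + N n ≠ 0 := (add_pos_of_pos_of_nonneg (ha n) (hN0 n)).ne'
    simp only [Pi.div_apply]
    rw [div_eq_iff h2, eq_comm]
    have h3 : (σ n)⁻¹ * (σ n * K n - N n) * (σ n * K n + N n)
        = (σ n)⁻¹ * ((σ n * K n) ^ 2 - N n ^ 2) := by ring
    rw [h3, hNsq]
    field_simp
    ring
  have hmain := (hNlim.inv₀ hc.ne').smul
    (((hσK.smul hβconv).add_const (κ₀ • μ₀)).add (hq.smul_const β))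
  have e : c⁻¹ • (c • (0 : EuclideanSpace ℝ (Fin p)) + κ₀ • μ₀ + (-(κ₀ * ⟪μ₀, β⟫)) • β)
      = (κ₀ / c) • (μ₀ - ⟪μ₀, β⟫ • β) := by
    module
  rw [e] at hmain
  refine hmain.congr' ?_
  filter_upwards [hNlim.eventually_ne hc.ne'] with n hn
  have h1 := (hσpos n).ne'
  have hv : N n = σ n * ‖K n • βn n + κ₀ • μ₀‖ := by
    rw [hN, mul_smul, mul_smul, ← smul_add, norm_smul, Real.norm_of_nonneg (hσpos n).le]
  have hv' : ‖K n • βn n + κ₀ • μ₀‖⁻¹ = σ n * (N n)⁻¹ := by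
    rw [hv, mul_inv, mul_inv_cancel_left₀ h1]
  rw [hv']
  match_scalars <;> field_simp <;> ring
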